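/- arXiv:2207.02034 — 2 statements merged into one kernel-verified Lean document; each statement's English description precedes it below -/
import Mathlib

section
/- Let R be a Hecke symmetry with parameter q such that j_q ≠ 0 for 2 ≤ j ≤ k. Then the R-symmetrizer S^(k) is an idempotent, S^(k) S^(k) = S^(k), and it absorbs the lower symmetrizer: S^(k) S^(k−1) = S^(k−1) S^(k) = S^(k), where S^(k−1) acts in the first k−1 tensor factors of (ℂ^N)^{⊗k}. -/
open Matrix BigOperators

noncomputable section

/-- An `N² × N²` complex matrix, viewed as an operator on `ℂ^N ⊗ ℂ^N`. -/
abbrev RMat (N : ℕ) := Matrix (Fin N × Fin N) (Fin N × Fin N) ℂ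

/-- A matrix on the `k`-th tensor power of `ℂ^N`, with entries in `A`. -/
abbrev TMat (N k : ℕ) (A : Type _) := Matrix (Fin k → Fin N) (Fin k → Fin N) A

/-- The `q`-number `j_q = (q^j - q^{-j})/(q - q^{-1})`. -/
def qNum (q : ℂ) (j : ℕ) : ℂ := (q ^ j - q⁻¹ ^ j) / (q - q⁻¹)

/-- Embedding of an `N²×N²` matrix `R` into the `k`-th tensor power,
acting in the (0-based) tensor factors `i` and `i+1`.  The paper's `R_i`
(1-based) is `embR k R (i-1)`. -/
def embR {N : ℕ} (k : ℕ) (R : RMat N) (i : ℕ) : TMat N k ℂ := fun f g =>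
  if h : i + 1 < k then
    if ∀ j : Fin k, j.val ≠ i → j.val ≠ i + 1 → f j = g j then
      R (f ⟨i, Nat.lt_of_succ_lt h⟩, f ⟨i + 1, h⟩) (g ⟨i, Nat.lt_of_succ_lt h⟩, g ⟨i + 1, h⟩)
    else 0
  else (1 : TMat N k ℂ) f g

/-- `X ⊗ I^{⊗(k-1)}` : the first copy `X_{1̄}` of an `N×N` matrix over `A`. -/
def emb1 {N : ℕ} (k : ℕ) {A : Type _} [Ring A] (X : Matrix (Fin N) (Fin N) A) :
    TMat N k A := fun f g =>
  if h : 0 < k then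
    if ∀ j : Fin k, j.val ≠ 0 → f j = g j then X (f ⟨0, h⟩) (g ⟨0, h⟩) else 0
  else (1 : TMat N k A) f g

/-- Lift a complex matrix to a matrix over the `ℂ`-algebra `A`. -/
def liftC {N k : ℕ} (A : Type _) [Ring A] [Algebra ℂ A] (X : TMat N k ℂ) : TMat N k A :=
  X.map (algebraMap ℂ A)

/-- The copies `X_{1̄}, X_{2̄}, …` of `X` in the `k`-th tensor power:
`copyX k R Rinv X i` is the paper's `X_{\overline{i+1}}`, i.e.
`X_{1̄} = X ⊗ I^{⊗(k-1)}` and `X_{\overline{i+1}} = R_i X_{ī} R_i⁻¹`. -/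
def copyX {N : ℕ} (k : ℕ) (R Rinv : RMat N) {A : Type _} [Ring A] [Algebra ℂ A]
    (X : Matrix (Fin N) (Fin N) A) : ℕ → TMat N k A
  | 0 => emb1 k X
  | i + 1 => liftC A (embR k R i) * copyX k R Rinv X i * liftC A (embR k Rinv i)

/-- The `R`-skew-symmetrizers, on the ambient `k`-th tensor power:
`Asym k R q j` is `A^{(j)}` (acting in the first `j` factors). -/
def Asym {N : ℕ} (k : ℕ) (R : RMat N) (q : ℂ) : ℕ → TMat N k ℂ
  | 0 => 1
  | 1 => 1
  | j + 2 =>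
      (qNum q (j + 2))⁻¹ •
        (Asym k R q (j + 1) *
          ((q ^ (j + 1)) • (1 : TMat N k ℂ) - (qNum q (j + 1)) • embR k R j) *
          Asym k R q (j + 1))

/-- The `R`-symmetrizers, on the ambient `k`-th tensor power:
`Ssym k R q j` is `S^{(j)}` (acting in the first `j` factors). -/
def Ssym {N : ℕ} (k : ℕ) (R : RMat N) (q : ℂ) : ℕ → TMat N k ℂ
  | 0 => 1
  | 1 => 1
  | j + 2 =>
      (qNum q (j + 2))⁻¹ •
        (Ssym k R q (j + 1) *
          ((q⁻¹ ^ (j + 1)) • (1 : TMat N k ℂ) + (qNum q (j + 1)) • embR k R j) *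
          Ssym k R q (j + 1))

/-- The braid relation `R₁₂ R₂₃ R₁₂ = R₂₃ R₁₂ R₂₃` on `(ℂ^N)^{⊗3}`. -/
def IsBraiding {N : ℕ} (R : RMat N) : Prop :=
  embR 3 R 0 * embR 3 R 1 * embR 3 R 0 = embR 3 R 1 * embR 3 R 0 * embR 3 R 1

/-- The Hecke condition `(q·I − R)(q⁻¹·I + R) = 0`. -/
def HeckeCond {N : ℕ} (R : RMat N) (q : ℂ) : Prop :=
  (q • (1 : RMat N) - R) * (q⁻¹ • (1 : RMat N) + R) = 0

/-- The Reflection Equation `R M₁ R M₁ = M₁ R M₁ R` (on `(ℂ^N)^{⊗2}`,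
with entries in `A`). -/
def RERel {N : ℕ} (R : RMat N) {A : Type _} [Ring A] [Algebra ℂ A]
    (M : Matrix (Fin N) (Fin N) A) : Prop :=
  liftC A (embR 2 R 0) * emb1 2 M * liftC A (embR 2 R 0) * emb1 2 M
    = emb1 2 M * liftC A (embR 2 R 0) * emb1 2 M * liftC A (embR 2 R 0)

/-- The relation `R⁻¹ D₁ R⁻¹ D₁ = D₁ R⁻¹ D₁ R⁻¹` on the matrix `D`,
where `Rinv = R⁻¹`. -/
def DDRel {N : ℕ} (Rinv : RMat N) {A : Type _} [Ring A] [Algebra ℂ A]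
    (D : Matrix (Fin N) (Fin N) A) : Prop :=
  liftC A (embR 2 Rinv 0) * emb1 2 D * liftC A (embR 2 Rinv 0) * emb1 2 D
    = emb1 2 D * liftC A (embR 2 Rinv 0) * emb1 2 D * liftC A (embR 2 Rinv 0)

/-- The permutation relations `D₁ R M₁ = R M₁ R⁻¹ D₁ R⁻¹ + I`, where `Rinv = R⁻¹`. -/
def PermRel {N : ℕ} (R Rinv : RMat N) {A : Type _} [Ring A] [Algebra ℂ A]
    (M D : Matrix (Fin N) (Fin N) A) : Prop :=
  emb1 2 D * liftC A (embR 2 R 0) * emb1 2 M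
    = liftC A (embR 2 R 0) * emb1 2 M * liftC A (embR 2 Rinv 0) * emb1 2 D *
        liftC A (embR 2 Rinv 0) + 1

/-- `Ψ` is the skew-inverse of `R`:  `Σ_{j,b} R^{ij}_{ab} Ψ^{bc}_{jd} = δ^i_d δ^c_a`. -/
def SkewInv {N : ℕ} (R Ψ : RMat N) : Prop :=
  ∀ i a c d : Fin N,
    (∑ j : Fin N, ∑ b : Fin N, R (i, j) (a, b) * Ψ (b, c) (j, d))
      = if i = d ∧ c = a then 1 else 0

/-- The matrix `C`, `C^c_d = Σ_i Ψ^{ic}_{id}`. -/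
def Cmat {N : ℕ} (Ψ : RMat N) : Matrix (Fin N) (Fin N) ℂ :=
  fun c d => ∑ i : Fin N, Ψ (i, c) (i, d)

/-- The `R`-trace over all `k` tensor factors: `⟨X⟩_{1…k} = Tr(C^{⊗k} X)`. -/
def rTr {N k : ℕ} {A : Type _} [Ring A] [Algebra ℂ A] (C : Matrix (Fin N) (Fin N) ℂ)
    (X : TMat N k A) : A :=
  ∑ f : Fin k → Fin N, ∑ g : Fin k → Fin N, (∏ j : Fin k, C (f j) (g j)) • X g f

/-- The chain `X_{1̄} X_{2̄} ⋯ X_{n̄}`. -/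
def upChain {N : ℕ} (k : ℕ) (R Rinv : RMat N) {A : Type _} [Ring A] [Algebra ℂ A]
    (X : Matrix (Fin N) (Fin N) A) (n : ℕ) : TMat N k A :=
  ((List.range n).map (copyX k R Rinv X)).prod

/-- The reversed chain `X_{n̄} X_{\overline{n-1}} ⋯ X_{1̄}`. -/
def downChain {N : ℕ} (k : ℕ) (R Rinv : RMat N) {A : Type _} [Ring A] [Algebra ℂ A]
    (X : Matrix (Fin N) (Fin N) A) (n : ℕ) : TMat N k A :=
  ((List.range n).reverse.map (copyX k R Rinv X)).prod

/-- The Capelli chain `L_{1̄}(L_{2̄} + q·1_q I)(L_{3̄} + q²·2_q I) ⋯ (L_{n̄} + q^{n-1}·(n-1)_q I)`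
(note `0_q = 0`). -/
def capChainA {N : ℕ} (k : ℕ) (R Rinv : RMat N) (q : ℂ) {A : Type _} [Ring A] [Algebra ℂ A]
    (L : Matrix (Fin N) (Fin N) A) (n : ℕ) : TMat N k A :=
  ((List.range n).map
    (fun i => copyX k R Rinv L i + ((q ^ i) * qNum q i) • (1 : TMat N k A))).prod

/-- The symmetric Capelli chain
`L_{1̄}(L_{2̄} - q⁻¹·1_q I) ⋯ (L_{n̄} - q^{-(n-1)}·(n-1)_q I)`. -/
def capChainS {N : ℕ} (k : ℕ) (R Rinv : RMat N) (q : ℂ) {A : Type _} [Ring A] [Algebra ℂ A]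
    (L : Matrix (Fin N) (Fin N) A) (n : ℕ) : TMat N k A :=
  ((List.range n).map
    (fun i => copyX k R Rinv L i - ((q⁻¹ ^ i) * qNum q i) • (1 : TMat N k A))).prod

/-- The descending chain `R_{a→b} = R_a R_{a-1} ⋯ R_b` (1-based indices;
identity when `b > a`). -/
def rChainDesc {N : ℕ} (k : ℕ) (R : RMat N) (a b : ℕ) : TMat N k ℂ :=
  ((List.range' b (a + 1 - b)).reverse.map (fun j => embR k R (j - 1))).prod

/-- The ascending chain `R_{b→a} = R_b R_{b+1} ⋯ R_a` (1-based indices;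
identity when `b > a`). -/
def rChainAsc {N : ℕ} (k : ℕ) (R : RMat N) (b a : ℕ) : TMat N k ℂ :=
  ((List.range' b (a + 1 - b)).map (fun j => embR k R (j - 1))).prod

/-!
By the quadratic and braid relations, `r i * S n = q • S n` for all `i < n - 1`: for the last
generator, rewrite one factor `S (n - 1)` of the recursion through `S (n - 2)`, which commutes with
`r (n - 2)`. Conversely, as `p ^ (n - 1) + [n - 1] * q = [n]` for the quantum integers `[n]`, each
`S m` with `m ≤ n` fixes every vector on which `r 0, …, r (m - 2)` act by `q`. Hence
`S m * S n = S n`. The recursion is palindromic, so the same argument in the opposite algebra gives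
`S n * S m = S n`.
-/

open scoped Kronecker

section SlotEmbedding

variable {m n ι ι' κ α S : Type*} [Fintype m] [Fintype n] [DecidableEq m] [DecidableEq n]
  [Fintype ι] [Fintype ι'] [Fintype κ] [DecidableEq ι] [DecidableEq ι'] [DecidableEq κ]
  [Fintype α] [DecidableEq α] [CommSemiring S]

variable (m n S) in
/-- The algebra homomorphism `X ↦ X ⊗ I`. -/
def kroneckerOneHom : Matrix m m S →ₐ[S] Matrix (m × n) (m × n) S :=
  AlgHom.ofLinearMap
    { toFun X := X ⊗ₖ 1
      map_add' X Y := add_kronecker X Y 1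
      map_smul' c X := smul_kronecker c X 1 }
    one_kronecker_one fun X Y ↦ by
      change (X * Y) ⊗ₖ (1 : Matrix n n S) = X ⊗ₖ 1 * Y ⊗ₖ 1
      rw [← mul_kronecker_mul, mul_one]

/-- Splits a multi-index on `κ` into its values on the slots `σ i` and its values off them. -/
def splitSlots (σ : ι ↪ κ) : (κ → α) ≃ (ι → α) × ({j // j ∉ Set.range σ} → α) :=
  (Equiv.piEquivPiSubtypeProd (· ∈ Set.range σ) fun _ ↦ α).trans
    (((Equiv.ofInjective σ σ.injective).symm.arrowCongr (Equiv.refl α)).prodCongr (Equiv.refl _))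

/-- For a matrix `X` acting on tensor factors indexed by `ι`, the operator on tensor factors indexed
by `κ` that acts as `X` in the slots `σ i` and as the identity in all others. -/
def slotEmb (σ : ι ↪ κ) : Matrix (ι → α) (ι → α) S →ₐ[S] Matrix (κ → α) (κ → α) S :=
  (reindexAlgEquiv S S (splitSlots σ).symm).toAlgHom.comp
    (kroneckerOneHom (ι → α) ({j // j ∉ Set.range σ} → α) S)

lemma slotEmb_eq_reindex_kronecker (σ : ι ↪ κ) (X : Matrix (ι → α) (ι → α) S) :
    slotEmb σ X = reindexAlgEquiv S S (splitSlots σ).symm (X ⊗ₖ 1) :=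
  rfl

lemma slotEmb_apply (σ : ι ↪ κ) (X : Matrix (ι → α) (ι → α) S) (f g : κ → α) :
    slotEmb σ X f g = if ∀ j ∉ Set.range σ, f j = g j then X (f ∘ σ) (g ∘ σ) else 0 := by
  change X (f ∘ σ) (g ∘ σ) * (1 : Matrix _ _ S) (splitSlots σ f).2 (splitSlots σ g).2 = _
  simp only [one_apply, funext_iff, Subtype.forall, mul_ite, mul_one, mul_zero]
  rfl

lemma slotEmb_slotEmb (σ : ι ↪ κ) (τ : ι' ↪ ι) (X : Matrix (ι' → α) (ι' → α) S) :
    slotEmb σ (slotEmb τ X) = slotEmb (τ.trans σ) X := by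
  ext f g
  have agree_off_trans : (∀ j ∉ Set.range (τ.trans σ), f j = g j) ↔
      (∀ j ∉ Set.range σ, f j = g j) ∧ ∀ i ∉ Set.range τ, f (σ i) = g (σ i) := by
    simp only [Set.mem_range, Function.Embedding.trans_apply]
    grind [σ.injective]
  simp only [slotEmb_apply, agree_off_trans, ite_and]
  rfl

lemma slotEmb_subtype_compl_range (σ : ι ↪ κ)
    (Y : Matrix ({j // j ∉ Set.range σ} → α) ({j // j ∉ Set.range σ} → α) S) :
    slotEmb (.subtype _) Y = reindexAlgEquiv S S (splitSlots σ).symm (1 ⊗ₖ Y) := by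
  ext f g
  change _ = (1 : Matrix (ι → α) _ S) (f ∘ σ) (g ∘ σ) * Y (f ·) (g ·)
  simp only [slotEmb_apply, one_apply, ite_mul, one_mul, zero_mul]
  simp [funext_iff, Function.comp_def]

lemma commute_slotEmb {σ : ι ↪ κ} {τ : ι' ↪ κ} (h : ∀ i, τ i ∉ Set.range σ)
    (X : Matrix (ι → α) (ι → α) S) (Y : Matrix (ι' → α) (ι' → α) S) :
    Commute (slotEmb σ X) (slotEmb τ Y) := by
  let τ' : ι' ↪ {j // j ∉ Set.range σ} := ⟨fun i ↦ ⟨τ i, h i⟩, fun i j hij ↦ by simpa using hij⟩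
  rw [show τ = τ'.trans (.subtype _) from rfl, ← slotEmb_slotEmb, slotEmb_subtype_compl_range,
    slotEmb_eq_reindex_kronecker]
  refine Commute.map ?_ (reindexAlgEquiv S S (splitSlots σ).symm)
  rw [commute_iff_eq, ← mul_kronecker_mul, ← mul_kronecker_mul]
  simp only [one_mul, mul_one]

end SlotEmbedding

section Braiding

variable {N m k : ℕ}

/-- The embedding of `m` consecutive slots among `k`, starting at the slot `i` (0-based). -/
def slotWindow (i : ℕ) (h : i + m ≤ k) : Fin m ↪ Fin k :=
  (Fin.natAddEmb i).trans (Fin.castLEEmb h)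

lemma mem_range_slotWindow {i : ℕ} {h : i + m ≤ k} {j : Fin k} :
    j ∈ Set.range (slotWindow i h) ↔ i ≤ j ∧ j < i + m := by
  refine ⟨?_, fun hj ↦ ⟨⟨j - i, by omega⟩, Fin.ext (Nat.add_sub_of_le hj.1)⟩⟩
  rintro ⟨x, rfl⟩
  simp [slotWindow]

lemma slotWindow_trans_slotWindow {l i j : ℕ} (h : j + l ≤ m) (h' : i + m ≤ k) :
    (slotWindow j h).trans (slotWindow i h') = slotWindow (i + j) (by omega) := by
  ext x
  simp [slotWindow, Nat.add_assoc]

lemma embR_eq_slotEmb (R : RMat N) {i : ℕ} (h : i + 2 ≤ k) :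
    embR k R i =
      slotEmb (slotWindow i h) (reindexAlgEquiv ℂ ℂ (finTwoArrowEquiv (Fin N)).symm R) := by
  ext f g
  have agree_off_window : (∀ j ∉ Set.range (slotWindow i h), f j = g j) ↔
      ∀ j : Fin k, j.val ≠ i → j.val ≠ i + 1 → f j = g j := by
    simp only [mem_range_slotWindow]
    grind
  simp only [slotEmb_apply, agree_off_window, embR, dif_pos (show i + 1 < k by omega)]
  rfl

lemma slotEmb_embR (R : RMat N) {i j : ℕ} (h : i + m ≤ k) (hj : j + 2 ≤ m) :
    slotEmb (slotWindow i h) (embR m R j) = embR k R (i + j) := by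
  rw [embR_eq_slotEmb R hj, embR_eq_slotEmb R (by omega), slotEmb_slotEmb,
    slotWindow_trans_slotWindow]

end Braiding

open MulOpposite

section HeckeFamily

variable {K A : Type*} [Field K] [Ring A] [Algebra K A]

/-- The two-parameter quantum integer `(p ^ n - q ^ n) / (p - q)`, written without division so that
`p = q` is allowed. -/
def pqNum (p q : K) (n : ℕ) : K := ∑ i ∈ Finset.range n, p ^ i * q ^ (n - 1 - i)

lemma pqNum_succ (p q : K) (n : ℕ) : pqNum p q (n + 1) = p ^ n + q * pqNum p q n :=
  geom_sum₂_succ_eq p q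

lemma qNum_eq_pqNum {q : ℂ} (hq : q ≠ q⁻¹) (n : ℕ) : qNum q n = pqNum q⁻¹ q n := by
  rw [qNum, pqNum, geom_sum₂_comm, geom₂_sum hq]

/-- Elements `r 0, …, r (k - 2)` of an algebra that satisfy the defining relations of the
Iwahori–Hecke algebra on `k` strands, with quadratic relation `(q - r i) (p + r i) = 0`. -/
structure IsHeckeFamily (p q : K) (k : ℕ) (r : ℕ → A) : Prop where
  hecke : ∀ i, i + 1 < k → (q • 1 - r i) * (p • 1 + r i) = 0
  braid : ∀ i, i + 2 < k → r i * r (i + 1) * r i = r (i + 1) * r i * r (i + 1)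
  commute : ∀ i j, i + 1 < j → j + 1 < k → Commute (r i) (r j)

/-- The symmetrizers built from a sequence `r` in an algebra: the `n`-th one involves
`r 0, …, r (n - 2)` and acts on `n` strands. -/
def symmetrizer (p q : K) (r : ℕ → A) : ℕ → A
  | 0 => 1
  | 1 => 1
  | n + 2 => (pqNum p q (n + 2))⁻¹ • (symmetrizer p q r (n + 1) *
      (p ^ (n + 1) • 1 + pqNum p q (n + 1) • r n) * symmetrizer p q r (n + 1))

variable {p q : K} {k n m i : ℕ} {r : ℕ → A}

lemma symmetrizer_op (n : ℕ) :
    symmetrizer p q (fun i ↦ op (r i)) n = op (symmetrizer p q r n) := by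
  induction n using symmetrizer.induct with
  | case1 | case2 => simp only [symmetrizer, op_one]
  | case3 n ih =>
    simp only [symmetrizer, ih, op_smul, op_mul, op_add, op_one, mul_assoc]

lemma symmetrizer_mul_of_eigen {x : A} (hn : ∀ j, 2 ≤ j → j ≤ n → pqNum p q j ≠ 0)
    (hx : ∀ i, i + 1 < n → r i * x = q • x) : symmetrizer p q r n * x = x := by
  induction n using symmetrizer.induct with
  | case1 | case2 => simp only [symmetrizer, one_mul]
  | case3 n ih =>
    replace ih : symmetrizer p q r (n + 1) * x = x :=
      ih (fun j h2 hj ↦ hn j h2 (by omega)) fun i hi ↦ hx i (by omega)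
    have middle : (p ^ (n + 1) • 1 + pqNum p q (n + 1) • r n) * x = pqNum p q (n + 2) • x := by
      rw [add_mul, smul_mul_assoc, one_mul, smul_mul_assoc, hx n (by omega), smul_smul, ← add_smul,
        pqNum_succ _ _ (n + 1), mul_comm q]
    rw [symmetrizer, smul_mul_assoc, mul_assoc, mul_assoc, ih, middle, mul_smul_comm, ih,
      inv_smul_smul₀ (hn (n + 2) (by omega) le_rfl)]

lemma mul_add_eq_smul_of_hecke {a : A} (hecke : (q • 1 - a) * (p • 1 + a) = 0) :
    a * (p • 1 + a) = q • (p • 1 + a) := by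
  rw [sub_mul, smul_one_mul, sub_eq_zero] at hecke
  exact hecke.symm

lemma mul_sandwich_of_braid {x c d : K} {a b T U : A}
    (hecke : (q • 1 - a) * (p • 1 + a) = 0) (braid : a * b * a = b * a * b) (comm : Commute T a)
    (hTU : T * U = U) (hUU : U * U = U) (hbU : b * U = q • U)
    (hU : c • U = T * (x • 1 + d • b) * T) :
    a * (U * ((p * x) • 1 + c • a) * U) = q • (U * ((p * x) • 1 + c • a) * U) := by
  -- The first term is a `q`-eigenvector of `a` by the quadratic relation, the second one by the
  -- braid relation.
  set W := x • ((p • 1 + a) * U) + d • (b * a * U) with hW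
  have braid' : a * (b * a * U) = q • (b * a * U) := by
    calc a * (b * a * U) = a * b * a * U := by simp only [mul_assoc]
      _ = b * a * (b * U) := by rw [braid, mul_assoc]
      _ = q • (b * a * U) := by rw [hbU, mul_smul_comm]
  have haW : a * W = q • W := by
    rw [hW, mul_add, mul_smul_comm, mul_smul_comm, ← mul_assoc a, mul_add_eq_smul_of_hecke hecke,
      braid', smul_mul_assoc, smul_add, smul_comm x, smul_comm d]
  have sandwich_eq : U * ((p * x) • 1 + c • a) * U = T * W := by
    have hcU : c • (U * a * U) = T * (x • (a * U) + d • (b * a * U)) := by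
      calc c • (U * a * U) = T * (x • 1 + d • b) * (T * a) * U := by
            rw [← smul_mul_assoc, ← smul_mul_assoc, hU, mul_assoc _ T a]
        _ = T * (x • 1 + d • b) * a * (T * U) := by rw [comm.eq]; simp only [mul_assoc]
        _ = T * (x • (a * U) + d • (b * a * U)) := by
            rw [hTU]; simp only [mul_assoc, add_mul, smul_mul_assoc, one_mul]
    calc U * ((p * x) • 1 + c • a) * U = (p * x) • U + c • (U * a * U) := by
          simp only [mul_add, add_mul, mul_smul_comm, smul_mul_assoc, mul_one, hUU]
      _ = T * ((p * x) • U) + T * (x • (a * U) + d • (b * a * U)) := by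
          rw [hcU, mul_smul_comm, hTU]
      _ = T * W := by
          rw [← mul_add, ← add_assoc, hW, add_mul, smul_add, smul_mul_assoc, one_mul, smul_smul,
            mul_comm p]
  rw [sandwich_eq, ← mul_assoc, ← comm.eq, mul_assoc, haW, mul_smul_comm]

namespace IsHeckeFamily

lemma op (h : IsHeckeFamily p q k r) : IsHeckeFamily p q k fun i ↦ op (r i) where
  hecke i hi := by
    have comm : Commute (q • 1 - r i) (p • 1 + r i) :=
      ((Commute.one_left _).smul_left q).sub_left
        (((Commute.one_right _).smul_right p).add_right (.refl _))
    exact unop_injective (comm.eq.symm.trans (h.hecke i hi))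
  braid i hi := unop_injective (by simpa [mul_assoc] using h.braid i hi)
  commute i j hij hj := (h.commute i j hij hj).op

lemma commute_symmetrizer (h : IsHeckeFamily p q k r) (hni : n ≤ i) (hi : i + 1 < k) :
    Commute (symmetrizer p q r n) (r i) := by
  induction n using symmetrizer.induct with
  | case1 | case2 => exact .one_left _
  | case3 n ih =>
    replace ih := ih (by omega)
    have comm_r : Commute (r n) (r i) := h.commute n i (by omega) hi
    exact ((ih.mul_left (((Commute.one_left _).smul_left _).add_left
      (comm_r.smul_left _))).mul_left ih).smul_left _

lemma mul_symmetrizer_last (h : IsHeckeFamily p q k r)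
    (hk : ∀ j, 2 ≤ j → j ≤ k → pqNum p q j ≠ 0) (hnk : n + 2 ≤ k)
    (eigen : ∀ i, i < n → r i * symmetrizer p q r (n + 1) = q • symmetrizer p q r (n + 1)) :
    r n * symmetrizer p q r (n + 2) = q • symmetrizer p q r (n + 2) := by
  rw [symmetrizer, mul_smul_comm, smul_comm q]
  congr 1
  match n with
  | 0 =>
    simpa [symmetrizer, pqNum] using mul_add_eq_smul_of_hecke (h.hecke 0 (by omega))
  | n + 1 =>
    have absorb : ∀ m ≤ n + 2,
        symmetrizer p q r m * symmetrizer p q r (n + 2) = symmetrizer p q r (n + 2) :=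
      fun m hm ↦ symmetrizer_mul_of_eigen (fun j h2 hj ↦ hk j h2 (by omega))
        fun i hi ↦ eigen i (by omega)
    rw [pow_succ' p (n + 1)]
    refine mul_sandwich_of_braid (h.hecke _ (by omega)) (h.braid n (by omega)).symm
      (h.commute_symmetrizer le_rfl (by omega)) (absorb _ (by omega)) (absorb _ le_rfl)
      (eigen n (by omega)) (d := pqNum p q (n + 1)) ?_
    rw [symmetrizer, smul_inv_smul₀ (hk _ (by omega) (by omega))]

lemma mul_symmetrizer (h : IsHeckeFamily p q k r) (hk : ∀ j, 2 ≤ j → j ≤ k → pqNum p q j ≠ 0)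
    (hnk : n ≤ k) (hi : i + 1 < n) : r i * symmetrizer p q r n = q • symmetrizer p q r n := by
  induction n using symmetrizer.induct generalizing i with
  | case1 | case2 => omega
  | case3 n ih =>
    obtain hin | rfl : i < n ∨ i = n := by omega
    · rw [symmetrizer, mul_smul_comm, ← mul_assoc, ← mul_assoc, ih (by omega) (by omega)]
      simp only [smul_mul_assoc, smul_comm q]
    · exact h.mul_symmetrizer_last hk hnk fun j hj ↦ ih (by omega) (by omega)

theorem symmetrizer_mul_symmetrizer (h : IsHeckeFamily p q k r)
    (hk : ∀ j, 2 ≤ j → j ≤ k → pqNum p q j ≠ 0) (hmn : m ≤ n) (hnk : n ≤ k) :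
    symmetrizer p q r m * symmetrizer p q r n = symmetrizer p q r n :=
  symmetrizer_mul_of_eigen (fun j h2 hj ↦ hk j h2 (by omega)) fun _ hi ↦
    h.mul_symmetrizer hk hnk (by omega)

theorem symmetrizer_mul_symmetrizer' (h : IsHeckeFamily p q k r)
    (hk : ∀ j, 2 ≤ j → j ≤ k → pqNum p q j ≠ 0) (hmn : m ≤ n) (hnk : n ≤ k) :
    symmetrizer p q r n * symmetrizer p q r m = symmetrizer p q r n := by
  simpa only [symmetrizer_op, ← op_mul, op_inj] using
    h.op.symmetrizer_mul_symmetrizer hk hmn hnk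

end IsHeckeFamily

end HeckeFamily

section Symmetrizer

variable {N k : ℕ} {R : RMat N} {q : ℂ}

lemma hecke_embR (hH : HeckeCond R q) {i : ℕ} (hi : i + 2 ≤ k) :
    (q • 1 - embR k R i) * (q⁻¹ • 1 + embR k R i) = 0 := by
  have image := congrArg (fun X ↦ slotEmb (slotWindow i hi)
    (reindexAlgEquiv ℂ ℂ (finTwoArrowEquiv (Fin N)).symm X)) hH
  simpa only [map_mul, map_sub, map_add, map_smul, map_one, map_zero, ← embR_eq_slotEmb] using image

lemma braid_embR (hbr : IsBraiding R) {i : ℕ} (hi : i + 3 ≤ k) :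
    embR k R i * embR k R (i + 1) * embR k R i =
      embR k R (i + 1) * embR k R i * embR k R (i + 1) := by
  have image := congrArg (slotEmb (slotWindow i hi)) hbr
  rwa [map_mul, map_mul, map_mul, map_mul, slotEmb_embR R hi (by omega),
    slotEmb_embR R hi (by omega)] at image

lemma commute_embR {i j : ℕ} (hij : i + 1 < j) (hj : j + 2 ≤ k) :
    Commute (embR k R i) (embR k R j) := by
  rw [embR_eq_slotEmb R (show i + 2 ≤ k by omega), embR_eq_slotEmb R hj]
  refine commute_slotEmb (fun l hl ↦ ?_) _ _
  have l_in_left := mem_range_slotWindow.1 hl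
  have l_in_right := mem_range_slotWindow.1 (Set.mem_range_self (f := slotWindow j hj) l)
  omega

lemma isHeckeFamily_embR (hbr : IsBraiding R) (hH : HeckeCond R q) :
    IsHeckeFamily q⁻¹ q k (embR k R) where
  hecke _ hi := hecke_embR hH hi
  braid _ hi := braid_embR hbr hi
  commute _ _ hij hj := commute_embR hij hj

lemma Ssym_eq_symmetrizer (hq : q ≠ q⁻¹) (n : ℕ) :
    Ssym k R q n = symmetrizer q⁻¹ q (embR k R) n := by
  induction n using symmetrizer.induct with
  | case1 | case2 => rfl
  | case3 n ih => simp only [Ssym, symmetrizer, ih, qNum_eq_pqNum hq]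

end Symmetrizer

/-- the symmetrizer is an idempotent and absorbs the lower
symmetrizer:  `S^(k) S^(k) = S^(k)` and `S^(k) S^(k−1) = S^(k−1) S^(k) = S^(k)`. -/
theorem statement11 {N : ℕ} (R Rinv : RMat N) (q : ℂ) (k : ℕ)
    (hq0 : q ≠ 0) (hq1 : q ≠ 1) (hqm1 : q ≠ -1)
    (hinv : R * Rinv = 1) (hinv' : Rinv * R = 1)
    (hbr : IsBraiding R) (hH : HeckeCond R q)
    (hqk : ∀ j : ℕ, 2 ≤ j → j ≤ k → qNum q j ≠ 0) :
    Ssym k R q k * Ssym k R q k = Ssym k R q k ∧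
    Ssym k R q k * Ssym k R q (k - 1) = Ssym k R q k ∧
    Ssym k R q (k - 1) * Ssym k R q k = Ssym k R q k := by
  have hq : q ≠ q⁻¹ := by simp [self_eq_inv₀, hq0, hq1, hqm1]
  have family : IsHeckeFamily q⁻¹ q k (embR k R) := isHeckeFamily_embR hbr hH
  have hk : ∀ j, 2 ≤ j → j ≤ k → pqNum q⁻¹ q j ≠ 0 := by simpa only [qNum_eq_pqNum hq] using hqk
  simp only [Ssym_eq_symmetrizer hq]
  exact ⟨family.symmetrizer_mul_symmetrizer hk le_rfl le_rfl,
    family.symmetrizer_mul_symmetrizer' hk (Nat.sub_le k 1) le_rfl,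
    family.symmetrizer_mul_symmetrizer hk (Nat.sub_le k 1) le_rfl⟩
end
end

section
/- Let R be a Hecke symmetry with parameter q such that j_q ≠ 0 for 2 ≤ j ≤ k, and let M be an N×N matrix with entries in a unital associative ℂ-algebra 𝒜 satisfying the Reflection Equation R M₁ R M₁ = M₁ R M₁ R. Then the R-skew-symmetrizer commutes with the chain of copies of M: A^(k) M_{1̄} M_{2̄} ⋯ M_{k̄} = M_{1̄} M_{2̄} ⋯ M_{k̄} A^(k), as N^k×N^k matrices over 𝒜. -/
open Matrix BigOperators

noncomputable section

/-!
Write `a = R_i`, `b = R_{i+1}`, `x = M_ī` and `y = a x a⁻¹`.  For `i = 1` the Reflection Equation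
says that `a` commutes with `x a x`.  By the braid relation, conjugation by `a b` sends `a` to `b`,
and it sends `x` to `y` because `b` commutes with `x`; hence it carries the Reflection Equation for
`(a, x)` to the one for `(b, y)`.  Likewise conjugation by `b a` sends `b` to `a` and `x` to
`b y b⁻¹`, so `R_i` commutes with `M_{\overline{i+2}}`.  It follows that every `R_i` with `i < n`,
and thus the whole algebra these matrices generate, commutes with `M_{1̄} ⋯ M_{n̄}`; the
skew-symmetrizer `A^(n)` lies in that algebra.
-/

section Monoid

variable {B : Type*} [Monoid B]

theorem commute_of_semiconjBy {u a b x y : B} (hu : IsUnit u) (hab : SemiconjBy u a b)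
    (hxy : SemiconjBy u x y) (h : Commute a x) : Commute b y :=
  hu.mul_right_cancel <|
    calc b * y * u = u * (a * x) := (hab.mul_right hxy).eq.symm
      _ = u * (x * a) := by rw [h.eq]
      _ = y * b * u := (hxy.mul_right hab).eq

theorem commute_mul_mul_of_braid {a b x y : B} (ha : IsUnit a) (hb : IsUnit b)
    (hbraid : a * b * a = b * a * b) (hbx : Commute b x) (hxy : SemiconjBy a x y)
    (h : Commute a (x * a * x)) : Commute b (y * b * y) := by
  have hab : SemiconjBy (a * b) a b := hbraid.trans (mul_assoc b a b)
  have hx : SemiconjBy (a * b) x y := hxy.mul_left hbx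
  exact commute_of_semiconjBy (ha.mul hb) hab ((hx.mul_right hab).mul_right hx) h

theorem commute_of_braid {a b x y z : B} (ha : IsUnit a) (hb : IsUnit b)
    (hbraid : a * b * a = b * a * b) (hbx : Commute b x) (hxy : SemiconjBy a x y)
    (hyz : SemiconjBy b y z) : Commute a z := by
  have hba : SemiconjBy (b * a) b a := hbraid.symm.trans (mul_assoc a b a)
  exact commute_of_semiconjBy (hb.mul ha) hba (hyz.mul_left hxy) hbx

theorem commute_mul_of_commute_mul_mul {a x y : B} (ha : IsUnit a) (hxy : SemiconjBy a x y)
    (h : Commute a (x * a * x)) : Commute a (x * y) := by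
  have hxya : x * y * a = x * a * x := by rw [mul_assoc, ← hxy.eq, mul_assoc]
  refine ha.mul_right_cancel ?_
  rw [mul_assoc, hxya, h.eq]

/-- Elements `x 0, …, x (k - 1)` of a monoid that behave like the copies `M_{1̄}, …, M_{k̄}` of a
solution of the Reflection Equation with respect to a representation `r 0, …, r (k - 2)` of the
braid group on `k` strands.  The recursion `x (i + 1) = r i * x i * (r i)⁻¹` and the Reflection
Equation `r 0 * x 0 * r 0 * x 0 = x 0 * r 0 * x 0 * r 0` are encoded by `SemiconjBy` and
`Commute`. -/
structure IsReflectionFamily (k : ℕ) (r x : ℕ → B) : Prop where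
  isUnit : ∀ i, i + 1 < k → IsUnit (r i)
  braid : ∀ i, i + 2 < k → r i * r (i + 1) * r i = r (i + 1) * r i * r (i + 1)
  commute_far : ∀ i j, i + 1 < j → j + 1 < k → Commute (r i) (r j)
  semiconjBy : ∀ i, i + 1 < k → SemiconjBy (r i) (x i) (x (i + 1))
  commute_zero : ∀ j, 0 < j → j + 1 < k → Commute (r j) (x 0)
  reflection_zero : 1 < k → Commute (r 0) (x 0 * r 0 * x 0)

namespace IsReflectionFamily

variable {k : ℕ} {r x : ℕ → B}

theorem commute_of_lt (h : IsReflectionFamily k r x) {i j : ℕ} (hij : i < j) (hj : j + 1 < k) :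
    Commute (r j) (x i) := by
  induction i with
  | zero => exact h.commute_zero j hij hj
  | succ i ih =>
    exact commute_of_semiconjBy (h.isUnit i (by omega)) (h.commute_far i j hij hj)
      (h.semiconjBy i (by omega)) (ih (by omega))

theorem reflection (h : IsReflectionFamily k r x) {i : ℕ} (hi : i + 1 < k) :
    Commute (r i) (x i * r i * x i) := by
  induction i with
  | zero => exact h.reflection_zero hi
  | succ i ih =>
    exact commute_mul_mul_of_braid (h.isUnit i (by omega)) (h.isUnit (i + 1) hi)
      (h.braid i hi) (h.commute_of_lt i.lt_succ_self hi) (h.semiconjBy i (by omega))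
      (ih (by omega))

theorem commute_of_add_two_le (h : IsReflectionFamily k r x) {i j : ℕ} (hij : i + 2 ≤ j)
    (hj : j < k) : Commute (r i) (x j) := by
  induction j, hij using Nat.le_induction with
  | base =>
    exact commute_of_braid (h.isUnit i (by omega)) (h.isUnit (i + 1) hj) (h.braid i hj)
      (h.commute_of_lt i.lt_succ_self hj) (h.semiconjBy i (by omega)) (h.semiconjBy (i + 1) hj)
  | succ j hij ih =>
    exact commute_of_semiconjBy (h.isUnit j hj) (h.commute_far i j hij hj).symm
      (h.semiconjBy j hj) (ih (by omega))

theorem commute_mul_succ (h : IsReflectionFamily k r x) {i : ℕ} (hi : i + 1 < k) :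
    Commute (r i) (x i * x (i + 1)) :=
  commute_mul_of_commute_mul_mul (h.isUnit i hi) (h.semiconjBy i hi) (h.reflection hi)

theorem commute_prod_range (h : IsReflectionFamily k r x) {i n : ℕ} (hi : i + 1 < n)
    (hn : n ≤ k) : Commute (r i) ((List.range n).map x).prod := by
  induction n, hi using Nat.le_induction with
  | base =>
    have hprefix : Commute (r i) ((List.range i).map x).prod := by
      refine Commute.list_prod_right _ _ fun y hy => ?_
      obtain ⟨j, hj, rfl⟩ := List.mem_map.1 hy
      exact h.commute_of_lt (List.mem_range.1 hj) hn
    rw [List.prod_range_succ, List.prod_range_succ, mul_assoc]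
    exact hprefix.mul_right (h.commute_mul_succ hn)
  | succ n hi ih =>
    rw [List.prod_range_succ]
    exact (ih (by omega)).mul_right (h.commute_of_add_two_le hi hn)

end IsReflectionFamily

end Monoid

section TensorEmb

variable {ι ι' κ S A : Type*} [Fintype ι] [DecidableEq ι] [Fintype ι'] [DecidableEq ι']
  [Fintype κ] [DecidableEq κ] [Fintype S] [DecidableEq S] [Semiring A]

open scoped Classical in
/-- The splitting of the tensor factors `κ` into those in the range of `e` and the remaining
ones. -/
def splitRange (S : Type*) (e : ι ↪ κ) :
    (κ → S) ≃ (ι → S) × ({j // j ∉ Set.range e} → S) :=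
  (Equiv.piEquivPiSubtypeProd (· ∈ Set.range e) fun _ => S).trans
    (((Equiv.ofInjective e e.injective).symm.arrowCongr (Equiv.refl S)).prodCongr (Equiv.refl _))

open scoped Classical in
/-- The operator `X ⊗ I` on the tensor factors `κ`, where `X` acts in the factors `e t`,
`t : ι`, and the identity `I` in all others. -/
def tensorEmb (e : ι ↪ κ) : Matrix (ι → S) (ι → S) A →+* Matrix (κ → S) (κ → S) A :=
  (reindexRingEquiv A (splitRange S e).symm).toRingHom.comp <|
    (blockDiagonalRingHom (ι → S) ({j // j ∉ Set.range e} → S) A).comp (Pi.constRingHom _ _)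

theorem tensorEmb_apply (e : ι ↪ κ) (X : Matrix (ι → S) (ι → S) A) (f g : κ → S)
    [Decidable (∀ j ∉ Set.range e, f j = g j)] :
    tensorEmb e X f g =
      if ∀ j ∉ Set.range e, f j = g j then X (f ∘ e) (g ∘ e) else 0 := by
  have hoff : (splitRange S e f).2 = (splitRange S e g).2 ↔ ∀ j ∉ Set.range e, f j = g j :=
    funext_iff.trans Subtype.forall
  classical
  exact (blockDiagonal_apply _ _ _).trans (if_congr hoff rfl rfl)

theorem tensorEmb_trans (e : ι ↪ ι') (e' : ι' ↪ κ) (X : Matrix (ι → S) (ι → S) A) :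
    tensorEmb (e.trans e') X = tensorEmb e' (tensorEmb e X) := by
  classical
  ext f g
  simp only [tensorEmb_apply, ← ite_and]
  refine if_congr ⟨fun h => ⟨fun j hj => h j ?_, fun t ht => h (e' t) ?_⟩, fun h j hj => ?_⟩ rfl rfl
  · rintro ⟨s, rfl⟩
    exact hj ⟨e s, rfl⟩
  · rintro ⟨s, hs⟩
    exact ht ⟨s, e'.injective hs⟩
  · by_cases hj' : j ∈ Set.range e'
    · obtain ⟨t, rfl⟩ := hj'
      exact h.2 t fun ⟨s, hs⟩ => hj ⟨s, congrArg e' hs⟩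
    · exact h.1 j hj'

theorem tensorEmb_map {A' : Type*} [Semiring A'] (φ : A →+* A') (e : ι ↪ κ)
    (X : Matrix (ι → S) (ι → S) A) : (tensorEmb e X).map φ = tensorEmb e (X.map φ) := by
  classical
  ext f g
  simp only [map_apply, tensorEmb_apply, apply_ite φ, map_zero]

theorem tensorEmb_mul_tensorEmb_apply {e : ι ↪ κ} {e' : ι' ↪ κ}
    (hd : Disjoint (Set.range e) (Set.range e')) (X : Matrix (ι → S) (ι → S) A)
    (Y : Matrix (ι' → S) (ι' → S) A) (f h : κ → S)
    [Decidable (∀ j ∉ Set.range e ∪ Set.range e', f j = h j)] :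
    (tensorEmb e X * tensorEmb e' Y) f h =
      if ∀ j ∉ Set.range e ∪ Set.range e', f j = h j then
        X (f ∘ e) (h ∘ e) * Y (f ∘ e') (h ∘ e') else 0 := by
  classical
  -- The only intermediate index that can contribute to the sum.
  let g₀ : κ → S := (Set.range e).piecewise h f
  have hg₀e : g₀ ∘ e = h ∘ e := funext fun t => Set.piecewise_eq_of_mem _ _ _ ⟨t, rfl⟩
  have hg₀e' : g₀ ∘ e' = f ∘ e' := funext fun t =>
    Set.piecewise_eq_of_notMem _ _ _ fun ht => hd.notMem_of_mem_left ht ⟨t, rfl⟩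
  have hfg₀ : ∀ j ∉ Set.range e, f j = g₀ j := fun j hj =>
    (Set.piecewise_eq_of_notMem _ _ _ hj).symm
  have hg₀h : (∀ j ∉ Set.range e', g₀ j = h j) ↔
      ∀ j ∉ Set.range e ∪ Set.range e', f j = h j := by
    simp only [Set.mem_union, not_or, and_imp, g₀, Set.piecewise]
    grind
  have huniq : ∀ g, (∀ j ∉ Set.range e, f j = g j) → (∀ j ∉ Set.range e', g j = h j) →
      g = g₀ := by
    intro g hfg hgh
    funext j
    by_cases hj : j ∈ Set.range e
    · rw [hgh j (hd.notMem_of_mem_left hj)]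
      exact (Set.piecewise_eq_of_mem _ _ _ hj).symm
    · rw [← hfg j hj, hfg₀ j hj]
  rw [mul_apply, Finset.sum_eq_single g₀]
  · simp only [tensorEmb_apply, if_pos hfg₀, hg₀h, hg₀e, hg₀e', mul_ite, mul_zero]
  · intro g _ hg
    simp only [tensorEmb_apply, ite_mul, zero_mul, mul_ite, mul_zero, ← ite_and]
    exact if_neg fun hfgh => hg (huniq g hfgh.2 hfgh.1)
  · simp

theorem commute_tensorEmb {e : ι ↪ κ} {e' : ι' ↪ κ}
    (hd : Disjoint (Set.range e) (Set.range e')) {X : Matrix (ι → S) (ι → S) A}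
    {Y : Matrix (ι' → S) (ι' → S) A} (h : ∀ a b c d, Commute (X a b) (Y c d)) :
    Commute (tensorEmb e X) (tensorEmb e' Y) := by
  classical
  refine Matrix.ext fun f g => ?_
  rw [tensorEmb_mul_tensorEmb_apply hd, tensorEmb_mul_tensorEmb_apply hd.symm]
  exact if_congr (by rw [Set.union_comm]) (h _ _ _ _) rfl

end TensorEmb

section Window

variable {i m k : ℕ}

/-- The inclusion of the `m` consecutive tensor factors `i, …, i + m - 1` into all `k` factors. -/
def window (h : i + m ≤ k) : Fin m ↪ Fin k :=
  (Fin.natAddEmb i).trans (Fin.castLEEmb h)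

theorem mem_range_window (h : i + m ≤ k) {j : Fin k} :
    j ∈ Set.range (window h) ↔ i ≤ j ∧ j < i + m := by
  constructor
  · rintro ⟨t, rfl⟩
    exact ⟨Nat.le_add_right i t, Nat.add_lt_add_left t.isLt i⟩
  · rintro ⟨hij, hji⟩
    exact ⟨⟨j - i, by omega⟩, Fin.ext (Nat.add_sub_cancel' hij)⟩

theorem disjoint_range_window {i' m' : ℕ} (h : i + m ≤ k) (h' : i' + m' ≤ k)
    (hd : i + m ≤ i') : Disjoint (Set.range (window h)) (Set.range (window h')) := by
  refine Set.disjoint_left.2 fun j hj hj' => ?_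
  rw [mem_range_window] at hj hj'
  omega

theorem window_trans_window {l n : ℕ} (h : l + n ≤ m) (h' : i + m ≤ k) :
    (window h).trans (window h') = window (i := i + l) (by omega) :=
  Function.Embedding.ext fun t => Fin.ext (Nat.add_assoc i l t).symm

end Window

section Copies

variable {N k : ℕ}

theorem embR_eq_tensorEmb {i : ℕ} (h : i + 2 ≤ k) (R : RMat N) :
    embR k R i = tensorEmb (window h) (reindexRingEquiv ℂ (finTwoArrowEquiv (Fin N)).symm R) := by
  classical
  ext f g
  rw [embR, dif_pos (by omega), tensorEmb_apply]
  refine if_congr (forall_congr' fun j => ?_) rfl rfl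
  rw [mem_range_window, ← and_imp]
  exact imp_congr_left (by omega)

theorem embR_of_not_lt {i : ℕ} (h : ¬ i + 1 < k) (R : RMat N) : embR k R i = 1 := by
  ext f g
  rw [embR, dif_neg h]

theorem embR_eq_tensorEmb_embR {i m l : ℕ} (h : i + m ≤ k) (hl : l + 1 < m) (R : RMat N) :
    embR k R (i + l) = tensorEmb (window h) (embR m R l) := by
  rw [embR_eq_tensorEmb (i := l) hl, ← tensorEmb_trans, window_trans_window,
    embR_eq_tensorEmb (i := i + l)]

/-- `fun R => embR k R i` as a monoid homomorphism; it is constantly `1` if `k ≤ i + 1`. -/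
def embRHom (k i : ℕ) : RMat N →* TMat N k ℂ where
  toFun R := embR k R i
  map_one' := by
    by_cases h : i + 1 < k
    · rw [embR_eq_tensorEmb h, map_one, map_one]
    · exact embR_of_not_lt h 1
  map_mul' R S := by
    by_cases h : i + 1 < k
    · simp only [embR_eq_tensorEmb (i := i) h, map_mul]
    · simp only [embR_of_not_lt h, mul_one]

theorem embR_braid {R : RMat N} (hR : IsBraiding R) {i : ℕ} (h : i + 2 < k) :
    embR k R i * embR k R (i + 1) * embR k R i =
      embR k R (i + 1) * embR k R i * embR k R (i + 1) := by
  have h₀ : embR k R i = tensorEmb (window (m := 3) h) (embR 3 R 0) :=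
    embR_eq_tensorEmb_embR (m := 3) (l := 0) h (by omega) R
  have h₁ : embR k R (i + 1) = tensorEmb (window (m := 3) h) (embR 3 R 1) :=
    embR_eq_tensorEmb_embR (m := 3) (l := 1) h (by omega) R
  rw [h₀, h₁, ← map_mul, ← map_mul, hR, map_mul, map_mul]

theorem commute_embR_embR (R S : RMat N) {i j : ℕ} (hij : i + 1 < j) (hj : j + 1 < k) :
    Commute (embR k R i) (embR k S j) := by
  rw [embR_eq_tensorEmb (i := i) (by omega), embR_eq_tensorEmb (i := j) hj]
  exact commute_tensorEmb (disjoint_range_window _ _ hij) fun _ _ _ _ => Commute.all _ _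

/-- The algebra generated by the operators `R_1, …, R_{n-1}` acting in the first `n` of the `k`
tensor factors.  For a Hecke symmetry it is the image of a Hecke algebra. -/
def braidAlgebra (k : ℕ) (R : RMat N) (n : ℕ) : Subalgebra ℂ (TMat N k ℂ) :=
  Algebra.adjoin ℂ (embR k R '' {i | i + 1 < n})

theorem embR_mem_braidAlgebra (R : RMat N) {i n : ℕ} (h : i + 1 < n) :
    embR k R i ∈ braidAlgebra k R n :=
  Algebra.subset_adjoin ⟨i, h, rfl⟩

theorem braidAlgebra_mono (R : RMat N) : Monotone (braidAlgebra k R) := fun _ _ hmn =>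
  Algebra.adjoin_mono <| Set.image_mono fun _ hi => lt_of_lt_of_le hi hmn

theorem Asym_mem_braidAlgebra (R : RMat N) (q : ℂ) : ∀ n, Asym k R q n ∈ braidAlgebra k R n
  | 0 => one_mem _
  | 1 => one_mem _
  | n + 2 => by
    have hA : Asym k R q (n + 1) ∈ braidAlgebra k R (n + 2) :=
      braidAlgebra_mono R (Nat.le_succ _) (Asym_mem_braidAlgebra R q (n + 1))
    have hR : embR k R n ∈ braidAlgebra k R (n + 2) := embR_mem_braidAlgebra R (Nat.lt_succ_self _)
    have hfactor : q ^ (n + 1) • (1 : TMat N k ℂ) - qNum q (n + 1) • embR k R n ∈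
        braidAlgebra k R (n + 2) :=
      sub_mem (Subalgebra.smul_mem _ (one_mem _) _) (Subalgebra.smul_mem _ hR _)
    exact Subalgebra.smul_mem _ (mul_mem (mul_mem hA hfactor) hA) _

variable {A : Type*} [Ring A]

theorem emb1_eq_tensorEmb (h : 0 + 1 ≤ k) (X : Matrix (Fin N) (Fin N) A) :
    emb1 k X =
      tensorEmb (window h) (reindexRingEquiv A (Equiv.funUnique (Fin 1) (Fin N)).symm X) := by
  classical
  ext f g
  rw [emb1, dif_pos (by omega), tensorEmb_apply]
  refine if_congr (forall_congr' fun j => ?_) rfl rfl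
  rw [mem_range_window]
  exact imp_congr_left (by omega)

theorem emb1_eq_tensorEmb_emb1 {m : ℕ} (h : 0 + m ≤ k) (hm : 0 < m)
    (X : Matrix (Fin N) (Fin N) A) : emb1 k X = tensorEmb (window h) (emb1 m X) := by
  rw [emb1_eq_tensorEmb (k := m) (by omega), ← tensorEmb_trans, window_trans_window,
    emb1_eq_tensorEmb]

variable [Algebra ℂ A]

variable (N k A) in
/-- `liftC` as an algebra homomorphism. -/
def liftCHom : TMat N k ℂ →ₐ[ℂ] TMat N k A :=
  (Algebra.ofId ℂ A).mapMatrix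

theorem liftC_tensorEmb {m : ℕ} (e : Fin m ↪ Fin k) (X : TMat N m ℂ) :
    liftC A (tensorEmb e X) = tensorEmb e (liftC A X) :=
  tensorEmb_map (algebraMap ℂ A) e X

theorem commute_liftC_embR_emb1 (R : RMat N) (M : Matrix (Fin N) (Fin N) A) {j : ℕ}
    (hj₀ : 0 < j) (hj : j + 1 < k) : Commute (liftC A (embR k R j)) (emb1 k M) := by
  rw [embR_eq_tensorEmb (i := j) hj, liftC_tensorEmb, emb1_eq_tensorEmb (by omega)]
  exact (commute_tensorEmb (disjoint_range_window _ _ (by omega)) fun _ _ _ _ =>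
    Algebra.commute_algebraMap_right _ _).symm

theorem RERel.commute {R : RMat N} {M : Matrix (Fin N) (Fin N) A} (hRE : RERel R M)
    (hk : 1 < k) :
    Commute (liftC A (embR k R 0)) (emb1 k M * liftC A (embR k R 0) * emb1 k M) := by
  have hR : liftC A (embR k R 0) = tensorEmb (window (i := 0) hk) (liftC A (embR 2 R 0)) := by
    rw [← liftC_tensorEmb, ← embR_eq_tensorEmb_embR _ (by omega)]
  have h₂ : Commute (liftC A (embR 2 R 0)) (emb1 2 M * liftC A (embR 2 R 0) * emb1 2 M) := by
    simpa only [Commute, SemiconjBy, RERel, mul_assoc] using hRE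
  rw [hR, emb1_eq_tensorEmb_emb1 (m := 2) (by omega) (by omega), ← map_mul, ← map_mul]
  exact h₂.map _

theorem semiconjBy_copyX (R : (RMat N)ˣ) (M : Matrix (Fin N) (Fin N) A) (i : ℕ) :
    SemiconjBy (liftC A (embR k ↑R i)) (copyX k ↑R ↑R⁻¹ M i) (copyX k ↑R ↑R⁻¹ M (i + 1)) :=
  let liftEmb : RMat N →* TMat N k A :=
    (liftCHom N k A : TMat N k ℂ →* TMat N k A).comp (embRHom k i)
  Units.mk_semiconjBy (Units.map liftEmb R) _

theorem isReflectionFamily_copyX {R : (RMat N)ˣ} (hR : IsBraiding (R : RMat N))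
    {M : Matrix (Fin N) (Fin N) A} (hRE : RERel (R : RMat N) M) :
    IsReflectionFamily k (fun i => liftC A (embR k ↑R i)) (copyX k ↑R ↑R⁻¹ M) where
  isUnit i _ := (R.isUnit.map (embRHom k i)).map (liftCHom N k A)
  braid i hi := by
    have hlift := congrArg (liftCHom N k A) (embR_braid hR hi)
    simp only [map_mul] at hlift
    exact hlift
  commute_far i j hij hj := (commute_embR_embR _ _ hij hj).map (liftCHom N k A)
  semiconjBy i _ := semiconjBy_copyX R M i
  commute_zero j hj₀ hj := commute_liftC_embR_emb1 _ M hj₀ hj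
  reflection_zero hk := hRE.commute hk

end Copies

theorem statement12_general {N k n : ℕ} (hn : n ≤ k) (R : (RMat N)ˣ)
    (hR : IsBraiding (R : RMat N)) {A : Type*} [Ring A] [Algebra ℂ A]
    {M : Matrix (Fin N) (Fin N) A} (hRE : RERel (R : RMat N) M) {X : TMat N k ℂ}
    (hX : X ∈ braidAlgebra k (R : RMat N) n) :
    Commute (liftC A X) (upChain k ↑R ↑R⁻¹ M n) := by
  let C := (Subalgebra.centralizer ℂ {upChain k (R : RMat N) ↑R⁻¹ M n}).comap (liftCHom N k A)
  suffices hC : braidAlgebra k (R : RMat N) n ≤ C from (hC hX _ rfl).symm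
  refine Algebra.adjoin_le ?_
  rintro _ ⟨i, hi, rfl⟩ _ rfl
  exact ((isReflectionFamily_copyX hR hRE).commute_prod_range hi hn).symm

/-- the skew-symmetrizer commutes with the chain of copies of `M`:
`A^(k) M_{1̄} M_{2̄} ⋯ M_{k̄} = M_{1̄} M_{2̄} ⋯ M_{k̄} A^(k)`. -/
theorem statement12 {N : ℕ} (R Rinv : RMat N) (q : ℂ) (k : ℕ)
    (hq0 : q ≠ 0) (hq1 : q ≠ 1) (hqm1 : q ≠ -1)
    (hinv : R * Rinv = 1) (hinv' : Rinv * R = 1)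
    (hbr : IsBraiding R) (hH : HeckeCond R q)
    (hqk : ∀ j : ℕ, 2 ≤ j → j ≤ k → qNum q j ≠ 0)
    {A : Type _} [Ring A] [Algebra ℂ A]
    (M : Matrix (Fin N) (Fin N) A) (hRE : RERel R M) :
    liftC A (Asym k R q k) * upChain k R Rinv M k
      = upChain k R Rinv M k * liftC A (Asym k R q k) :=
  (statement12_general le_rfl ⟨R, Rinv, hinv, hinv'⟩ hbr hRE
    (Asym_mem_braidAlgebra R q k)).eq
end
end
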